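/- Let P^k ⊆ H⁰(M_1(𝒜)) be the ℚ-subspace of locally constant functions representable as polynomials of degree at most k in the Heaviside functions x_1,…,x_n (the Varchenko–Gelfand filtration). Then the associated graded algebra ⊕_{k≥0} P^k/P^{k−1} is isomorphic as a graded ℚ-algebra to B(𝒜), graded by total degree in the generators e_i. -/

import Mathlib

/-!
Statement 3: the associated graded algebra of the Varchenko–Gelfand filtration on
`H⁰(M₁(𝒜))` is isomorphic, as a graded `ℚ`-algebra, to the Cordovil algebra `B(𝒜)`.
The isomorphism is expressed by a family of `ℚ`-linear equivalences
`Pᵏ/Pᵏ⁻¹ ≃ B(𝒜)ₖ` which is unital and compatible with products.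
-/

open MvPolynomial Set

variable {V : Type*} [NormedAddCommGroup V] [NormedSpace ℝ V] [FiniteDimensional ℝ V]
variable {n : ℕ}

/-- The complement `M₁(𝒜)` of the arrangement given by the affine forms `ω i`. -/
def M₁ (ω : Fin n → V →ᵃ[ℝ] ℝ) : Set V := {v | ∀ i, ω i v ≠ 0}

/-- The hyperplane `H i`. -/
def Hyp (ω : Fin n → V →ᵃ[ℝ] ℝ) (i : Fin n) : Set V := {v | ω i v = 0}

/-- The open positive half-space `H i⁺`. -/
def Hplus (ω : Fin n → V →ᵃ[ℝ] ℝ) (i : Fin n) : Set V := {v | 0 < ω i v}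

/-- The open negative half-space `H i⁻`. -/
def Hminus (ω : Fin n → V →ᵃ[ℝ] ℝ) (i : Fin n) : Set V := {v | ω i v < 0}

/-- The Heaviside function `x i`: the locally constant function on `M₁(𝒜)` which is
`1` on `H i⁺` and `0` on `H i⁻`. -/
noncomputable def heaviside (ω : Fin n → V →ᵃ[ℝ] ℝ) (i : Fin n) :
    LocallyConstant (M₁ ω) ℚ where
  toFun v := if 0 < ω i v.1 then 1 else 0
  isLocallyConstant := by
    rw [IsLocallyConstant.iff_exists_open]
    rintro ⟨v, hv⟩
    rcases lt_or_gt_of_ne (hv i) with h | h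
    · refine ⟨{w : M₁ ω | ω i w.1 < 0}, ?_, h, fun w hw => ?_⟩
      · exact (isOpen_lt ((ω i).continuous_of_finiteDimensional.comp
          continuous_subtype_val) continuous_const)
      · simp only [Set.mem_setOf_eq] at hw
        simp [not_lt.mpr hw.le, not_lt.mpr h.le]
    · refine ⟨{w : M₁ ω | 0 < ω i w.1}, ?_, h, fun w hw => ?_⟩
      · exact (isOpen_lt continuous_const ((ω i).continuous_of_finiteDimensional.comp
          continuous_subtype_val))
      · simp only [Set.mem_setOf_eq] at hw
        simp [hw, h]

/-- Family (1) of the Cordovil ideal: `e i ^ 2`. -/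
def bFam1 (ι : Type*) : Set (MvPolynomial ι ℚ) := {p | ∃ i : ι, p = X i ^ 2}

/-- Family (2): `∏_{i∈S} e i` whenever `⋂_{i∈S} Z i = ∅`. -/
def bFam2 {ι W : Type*} (Z : ι → Set W) : Set (MvPolynomial ι ℚ) :=
  {p | ∃ S : Finset ι, (⋂ i ∈ S, Z i) = ∅ ∧ p = ∏ i ∈ S, X i}

/-- Family (3): `Σ_{k∈S⁻} (∏_{i∈S⁺} e i · ∏_{j∈S⁻, j≠k} e j) -
Σ_{k∈S⁺} (∏_{i∈S⁺, i≠k} e i · ∏_{j∈S⁻} e j)` for disjoint `S⁺, S⁻` with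
`⋂_{i∈S⁺} Z⁺ i ∩ ⋂_{j∈S⁻} Z⁻ j = ∅` and `⋂_{i∈S⁺∪S⁻} Z i ≠ ∅`. -/
def bFam3 {ι W : Type*} [DecidableEq ι] (Z Zp Zm : ι → Set W) :
    Set (MvPolynomial ι ℚ) :=
  {p | ∃ Sp Sm : Finset ι, Disjoint Sp Sm ∧
    (⋂ i ∈ Sp, Zp i) ∩ (⋂ j ∈ Sm, Zm j) = ∅ ∧
    (⋂ i ∈ (Sp ∪ Sm : Finset ι), Z i) ≠ ∅ ∧
    p = (∑ k ∈ Sm, ((∏ i ∈ Sp, X i) * ∏ j ∈ Sm.erase k, X j)) -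
      ∑ k ∈ Sp, ((∏ i ∈ Sp.erase k, X i) * ∏ j ∈ Sm, X j)}

/-- The ideal `𝓘₀` defining the algebra `B(𝒜)`; the arrangement is recorded through its
hyperplanes `Z i` and open half-spaces `Zp i`, `Zm i`. -/
noncomputable def bIdeal {ι W : Type*} [DecidableEq ι] (Z Zp Zm : ι → Set W) :
    Ideal (MvPolynomial ι ℚ) :=
  Ideal.span (bFam1 ι ∪ bFam2 Z ∪ bFam3 Z Zp Zm)

/-- The algebra `B(𝒜) = ℚ[e_H : H ∈ 𝒜] / 𝓘₀`. -/
abbrev BAlg {ι W : Type*} [DecidableEq ι] (Z Zp Zm : ι → Set W) :=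
  MvPolynomial ι ℚ ⧸ bIdeal Z Zp Zm

/-- The degree-`k` graded component of `B(𝒜)` (grading by total degree in the
generators): the image of the homogeneous polynomials of degree `k`. -/
noncomputable def bGrade {ι W : Type*} [DecidableEq ι] (Z Zp Zm : ι → Set W) (k : ℕ) :
    Submodule ℚ (BAlg Z Zp Zm) :=
  Submodule.map (Ideal.Quotient.mkₐ ℚ (bIdeal Z Zp Zm)).toLinearMap
    (MvPolynomial.homogeneousSubmodule ι ℚ k)

/-- The Varchenko–Gelfand filtration: `Pᵏ` is the space of locally constant functions on
`M₁(𝒜)` representable by polynomials of total degree `≤ k` in the Heaviside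
functions. -/
noncomputable def vgFil (ω : Fin n → V →ᵃ[ℝ] ℝ) (k : ℕ) :
    Submodule ℚ (LocallyConstant (M₁ ω) ℚ) :=
  Submodule.map (MvPolynomial.aeval (R := ℚ) (heaviside ω)).toLinearMap
    (MvPolynomial.restrictTotalDegree (Fin n) ℚ k)

/-- The previous step `Pᵏ⁻¹` of the filtration, with `P⁻¹ = 0`. -/
noncomputable def vgPrev (ω : Fin n → V →ᵃ[ℝ] ℝ) : ℕ → Submodule ℚ (LocallyConstant (M₁ ω) ℚ)
  | 0 => ⊥
  | (k + 1) => vgFil ω k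

/-- The `k`-th graded piece `Pᵏ/Pᵏ⁻¹` of the associated graded of the VG filtration. -/
noncomputable abbrev vgGr (ω : Fin n → V →ᵃ[ℝ] ℝ) (k : ℕ) :=
  ↥(vgFil ω k) ⧸ Submodule.comap (vgFil ω k).subtype (vgPrev ω k)

/-!
The algebra of functions generated by the Heaviside functions is `ℚ[X₁, …, Xₙ]` modulo the ideal `J`
of polynomials vanishing at the Heaviside values of the points off the hyperplanes. The associated
graded algebra is therefore `ℚ[X₁, …, Xₙ]` modulo the initial ideal of `J`, which is generated by
the symbols (top degree parts) of the elements of `J`, and one has to show that this initial ideal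
is the ideal `𝓘₀` defining `B(𝒜)`.

Every generator of `𝓘₀` is the symbol of an element of `J`. The square `eᵢ²` comes from `Xᵢ² - Xᵢ`.
If no point has prescribed signs on `S`, then the product of the factors `Xᵢ` (sign `+`) and
`Xⱼ - 1` (sign `-`) lies in `J`. If the hyperplanes of `S` have no common point, some choice of
signs on `S` is not realized, which gives `∏ eᵢ`. If they have one, reflection in it shows that the
opposite signs are not realized either, and the difference of the two products has the relation (3)
as its symbol.

Conversely, these relations generate `J` compatibly with degrees. This is proved by deletion and
restriction, for arrangements on an arbitrary affine subspace `K`. Modulo `Xₙ² - Xₙ` an element of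
the ideal is `q + Xₙ r` with `q` and `r` free of `Xₙ`. Its jump across `Hₙ` is `r`, so `r` is a
relation on `K ∩ Hₙ` and by induction a combination of the basic relations there. Since a convex
region of `K` that misses `Hₙ` lies on one side of it, each basic relation `g` on `K ∩ Hₙ` lifts to
one on `K` of the form `Xₙ g - h` with `h` free of `Xₙ`. What remains after subtracting the lifts is
free of `Xₙ` and is a relation for the arrangement without `Hₙ`.
-/

/-! ### Polynomials of bounded degree and their symbols -/

section DegreeLT

variable {σ R : Type*} [CommSemiring R] {S T : Set σ} {k l : ℕ} {p q : MvPolynomial σ R}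

/-- The polynomials of total degree `< k` in the variables `X i`, `i ∈ T`; the strict bound makes
`degreeLT R T 0` the zero submodule. -/
noncomputable def degreeLT (R : Type*) [CommSemiring R] (T : Set σ) (k : ℕ) :
    Submodule R (MvPolynomial σ R) :=
  restrictSupport R {m | ↑m.support ⊆ T ∧ m.degree < k}

theorem mem_degreeLT :
    p ∈ degreeLT R T k ↔ ∀ m ∈ p.support, ↑m.support ⊆ T ∧ m.degree < k :=
  Iff.rfl

theorem degreeLT_mono (hT : S ⊆ T) (hk : k ≤ l) : degreeLT R S k ≤ degreeLT R T l :=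
  restrictSupport_mono R fun _ hm => ⟨hm.1.trans hT, hm.2.trans_le hk⟩

theorem degreeLT_zero : degreeLT R T 0 = ⊥ := by
  simp [degreeLT, restrictSupport_eq_span]

theorem restrictTotalDegree_eq_degreeLT (k : ℕ) :
    restrictTotalDegree σ R k = degreeLT R univ (k + 1) := by
  refine congrArg (restrictSupport R) (ext fun m => ?_)
  simp [Finsupp.degree_apply, Finsupp.sum]

theorem mul_mem_degreeLT (hp : p ∈ degreeLT R T (k + 1)) (hq : q ∈ degreeLT R T l) :
    p * q ∈ degreeLT R T (k + l) := by
  classical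
  have h := Submodule.mul_mem_mul hp hq
  rw [degreeLT, degreeLT, ← restrictSupport_add] at h
  refine restrictSupport_mono R ?_ h
  rintro _ ⟨m, ⟨hmT, hmk⟩, m', ⟨hmT', hml'⟩, rfl⟩
  refine ⟨fun i hi => ?_, ?_⟩
  · rcases Finset.mem_union.1 (Finsupp.support_add hi) with h | h
    exacts [hmT h, hmT' h]
  · change (m + m').degree < k + l
    rw [map_add]
    omega

theorem one_mem_degreeLT : (1 : MvPolynomial σ R) ∈ degreeLT R T 1 :=
  (monomial_mem_restrictSupport R).2 (.inl (by simp))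

theorem X_mem_degreeLT {i : σ} (hi : i ∈ T) : (X i : MvPolynomial σ R) ∈ degreeLT R T 2 :=
  (monomial_mem_restrictSupport R).2 (.inl
    ⟨(Finset.coe_subset.2 Finsupp.support_single_subset).trans (by simpa using hi), by simp⟩)

theorem exists_monomial_eq_X_pow_mul {i : σ} {m : σ →₀ ℕ} (hm : ↑m.support ⊆ insert i T) :
    ∃ a l, a + l = m.degree ∧ ∃ p ∈ degreeLT R T (l + 1), monomial m 1 = X i ^ a * p := by
  classical
  have hsplit : Finsupp.single i (m i) + m.erase i = m := Finsupp.single_add_erase i m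
  refine ⟨m i, (m.erase i).degree, ?_, monomial (m.erase i) 1,
    (monomial_mem_restrictSupport R).2 (.inl ⟨?_, Nat.lt_succ_self _⟩), ?_⟩
  · conv_rhs => rw [← hsplit]
    simp
  · rwa [Finsupp.support_erase, Finset.coe_erase, sdiff_singleton_subset_iff]
  · rw [X_pow_eq_monomial, monomial_mul, one_mul, hsplit]

theorem prod_mem_degreeLT {α : Type*} {s : Finset α} {f : α → MvPolynomial σ R}
    (hf : ∀ i ∈ s, f i ∈ degreeLT R T 2) : ∏ i ∈ s, f i ∈ degreeLT R T (s.card + 1) := by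
  classical
  induction s using Finset.induction_on with
  | empty => simpa using one_mem_degreeLT
  | insert a s ha ih =>
    rw [Finset.prod_insert ha, Finset.card_insert_of_notMem ha, add_comm s.card 1, add_assoc]
    rw [Finset.forall_mem_insert] at hf
    exact mul_mem_degreeLT hf.1 (ih hf.2)

theorem mem_degreeLT_of_isHomogeneous (hp : p.IsHomogeneous k) : p ∈ degreeLT R univ (k + 1) := by
  rw [← restrictTotalDegree_eq_degreeLT, mem_restrictTotalDegree]
  exact hp.totalDegree_le

theorem eq_zero_of_isHomogeneous_of_mem_degreeLT (hp : p.IsHomogeneous k)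
    (h : p ∈ degreeLT R T k) : p = 0 := by
  rw [← support_eq_empty, Finset.eq_empty_iff_forall_notMem]
  intro m hm
  refine (h hm).2.ne ?_
  rw [Finsupp.degree_eq_weight_one]
  exact hp (mem_support_iff.1 hm)

theorem eval_eq_of_eqOn {x y : σ → R} (hp : p ∈ degreeLT R T k) (hxy : EqOn x y T) :
    eval x p = eval y p := by
  rw [eval_eq, eval_eq]
  refine Finset.sum_congr rfl fun m hm => congrArg _ (Finset.prod_congr rfl fun i hi => ?_)
  rw [hxy ((hp hm).1 hi)]

end DegreeLT

section Symbol

variable {σ R : Type*} [CommRing R] {k l : ℕ} {p q g h : MvPolynomial σ R}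

/-- `HasSymbol k p g` says that `p` has degree at most `k` and that `g` is its homogeneous part
of degree `k`, i.e. the symbol of `p` in the `k`-th graded piece of the filtration by degree. -/
structure HasSymbol (k : ℕ) (p g : MvPolynomial σ R) : Prop where
  isHomogeneous : g.IsHomogeneous k
  sub_mem_degreeLT : p - g ∈ degreeLT R univ k

theorem hasSymbol_self (hg : g.IsHomogeneous k) : HasSymbol k g g :=
  ⟨hg, by simp⟩

theorem hasSymbol_homogeneousComponent (hp : p ∈ degreeLT R univ (k + 1)) :
    HasSymbol k p (homogeneousComponent k p) := by
  refine ⟨homogeneousComponent_isHomogeneous k p,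
    mem_degreeLT.2 fun m hm => ⟨subset_univ _, ?_⟩⟩
  rw [mem_support_iff, coeff_sub, coeff_homogeneousComponent] at hm
  split_ifs at hm with hk
  · simp at hm
  · rw [sub_zero, ← mem_support_iff] at hm
    exact lt_of_le_of_ne (Nat.le_of_lt_succ (mem_degreeLT.1 hp m hm).2) hk

theorem hasSymbol_X_sub_one (i : σ) : HasSymbol 1 (X i - 1 : MvPolynomial σ R) (X i) :=
  ⟨isHomogeneous_X R i, by simpa using one_mem_degreeLT⟩

theorem hasSymbol_X_sq_sub_X (i : σ) : HasSymbol 2 (X i ^ 2 - X i : MvPolynomial σ R) (X i ^ 2) :=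
  ⟨isHomogeneous_X_pow i 2, by simpa using X_mem_degreeLT (mem_univ i)⟩

namespace HasSymbol

theorem mem_degreeLT (hp : HasSymbol k p g) : p ∈ degreeLT R univ (k + 1) := by
  rw [← sub_add_cancel p g]
  exact add_mem (degreeLT_mono subset_rfl k.le_succ hp.sub_mem_degreeLT)
    (mem_degreeLT_of_isHomogeneous hp.isHomogeneous)

theorem eq (hg : HasSymbol k p g) (hh : HasSymbol k p h) : g = h := by
  refine sub_eq_zero.1 (eq_zero_of_isHomogeneous_of_mem_degreeLT
    (hg.isHomogeneous.sub hh.isHomogeneous) (T := univ) ?_)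
  simpa using sub_mem hh.sub_mem_degreeLT hg.sub_mem_degreeLT

theorem zero : HasSymbol k (0 : MvPolynomial σ R) 0 :=
  hasSymbol_self (isHomogeneous_zero σ R k)

theorem of_mem_degreeLT (hp : p ∈ degreeLT R univ k) : HasSymbol k p 0 :=
  ⟨isHomogeneous_zero σ R k, by simpa using hp⟩

theorem add (hp : HasSymbol k p g) (hq : HasSymbol k q h) : HasSymbol k (p + q) (g + h) :=
  ⟨hp.isHomogeneous.add hq.isHomogeneous, by
    simpa [add_sub_add_comm] using add_mem hp.sub_mem_degreeLT hq.sub_mem_degreeLT⟩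

theorem sub (hp : HasSymbol k p g) (hq : HasSymbol k q h) : HasSymbol k (p - q) (g - h) :=
  ⟨hp.isHomogeneous.sub hq.isHomogeneous, by
    simpa [sub_sub_sub_comm] using sub_mem hp.sub_mem_degreeLT hq.sub_mem_degreeLT⟩

theorem mul (hp : HasSymbol k p g) (hq : HasSymbol l q h) : HasSymbol (k + l) (p * q) (g * h) := by
  refine ⟨hp.isHomogeneous.mul hq.isHomogeneous, ?_⟩
  have hh := mem_degreeLT_of_isHomogeneous hq.isHomogeneous
  rw [show p * q - g * h = p * (q - h) + h * (p - g) by ring]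
  refine add_mem (mul_mem_degreeLT hp.mem_degreeLT hq.sub_mem_degreeLT) ?_
  rw [add_comm k l]
  exact mul_mem_degreeLT hh hp.sub_mem_degreeLT

theorem prod {α : Type*} {s : Finset α} {d : α → ℕ} {f g : α → MvPolynomial σ R}
    (h : ∀ i ∈ s, HasSymbol (d i) (f i) (g i)) :
    HasSymbol (∑ i ∈ s, d i) (∏ i ∈ s, f i) (∏ i ∈ s, g i) := by
  classical
  induction s using Finset.induction_on with
  | empty => simpa using hasSymbol_self (isHomogeneous_one σ R)
  | insert a s ha ih =>
    rw [Finset.forall_mem_insert] at h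
    rw [Finset.sum_insert ha, Finset.prod_insert ha, Finset.prod_insert ha]
    exact h.1.mul (ih h.2)

end HasSymbol

theorem homogeneousComponent_mul_of_isHomogeneous (hp : p.IsHomogeneous l) (k : ℕ)
    (q : MvPolynomial σ R) : homogeneousComponent k (p * q) =
      if l ≤ k then p * homogeneousComponent (k - l) q else 0 := by
  let := gradedAlgebra (σ := σ) (R := R)
  have hp' : p ∈ homogeneousSubmodule σ R l := hp
  split_ifs with hlk
  · simpa only [DirectSum.decompose, Equiv.coe_fn_mk, decomposition.decompose'_apply] using
      DirectSum.coe_decompose_mul_of_left_mem_of_le (homogeneousSubmodule σ R) (b := q) hp' hlk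
  · simpa only [DirectSum.decompose, Equiv.coe_fn_mk, decomposition.decompose'_apply] using
      DirectSum.coe_decompose_mul_of_left_mem_of_not_le (homogeneousSubmodule σ R) (b := q) hp' hlk

/-- The initial ideal of `J` for the filtration by degree: the ideal generated by the symbols of
the elements of `J`. -/
noncomputable def initialIdeal (J : Ideal (MvPolynomial σ R)) : Ideal (MvPolynomial σ R) :=
  Ideal.span {g | ∃ k, ∃ p ∈ J, HasSymbol k p g}

theorem exists_hasSymbol_homogeneousComponent_mul {J : Ideal (MvPolynomial σ R)}
    (hg : ∀ k, ∃ p ∈ J, HasSymbol k p (homogeneousComponent k g)) (a : MvPolynomial σ R) (k : ℕ) :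
    ∃ p ∈ J, HasSymbol k p (homogeneousComponent k (a * g)) := by
  induction a using MvPolynomial.induction_on' with
  | monomial m r =>
    have hm := isHomogeneous_monomial r (rfl : m.degree = m.degree)
    rw [homogeneousComponent_mul_of_isHomogeneous hm]
    split_ifs with hk
    · obtain ⟨p, hpJ, hp⟩ := hg (k - m.degree)
      refine ⟨monomial m r * p, J.mul_mem_left _ hpJ, ?_⟩
      simpa [Nat.add_sub_cancel' hk] using (hasSymbol_self hm).mul hp
    · exact ⟨0, J.zero_mem, .zero⟩
  | add a b ha hb =>
    obtain ⟨p, hpJ, hp⟩ := ha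
    obtain ⟨q, hqJ, hq⟩ := hb
    rw [add_mul, map_add]
    exact ⟨p + q, J.add_mem hpJ hqJ, hp.add hq⟩

theorem mem_initialIdeal_iff_of_isHomogeneous {J : Ideal (MvPolynomial σ R)}
    (hg : g.IsHomogeneous k) : g ∈ initialIdeal J ↔ ∃ p ∈ J, HasSymbol k p g := by
  refine ⟨fun h => ?_, fun h => Submodule.subset_span ⟨k, h⟩⟩
  rw [← homogeneousComponent_eq_self hg]
  clear hg
  induction h using Submodule.span_induction generalizing k with
  | mem g hg =>
    obtain ⟨l, p, hpJ, hp⟩ := hg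
    rw [homogeneousComponent_of_mem hp.isHomogeneous]
    split_ifs with hkl
    · exact ⟨p, hpJ, hkl ▸ hp⟩
    · exact ⟨0, J.zero_mem, .zero⟩
  | zero => exact ⟨0, J.zero_mem, by simpa using .zero⟩
  | add g h _ _ hg hh =>
    obtain ⟨p, hpJ, hp⟩ := hg (k := k)
    obtain ⟨q, hqJ, hq⟩ := hh (k := k)
    rw [map_add]
    exact ⟨p + q, J.add_mem hpJ hqJ, hp.add hq⟩
  | smul a g _ hg => exact exists_hasSymbol_homogeneousComponent_mul (fun _ => hg) a k

end Symbol

section SignedProd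

variable {ι R : Type*} [CommRing R] {Sp Sm : Finset ι} {i : ι}

/-- The polynomial `∏_{i ∈ Sp} X i · ∏_{i ∈ Sm} (X i - 1)`. At the Heaviside values of a point off
the hyperplanes it is nonzero exactly when the point is on the positive side of `H i` for `i ∈ Sp`
and on the negative side for `i ∈ Sm`. -/
noncomputable def signedProd (R : Type*) [CommRing R] (Sp Sm : Finset ι) : MvPolynomial ι R :=
  (∏ i ∈ Sp, X i) * ∏ i ∈ Sm, (X i - 1)

theorem signedProd_mem_degreeLT {T : Set ι} (hSp : ↑Sp ⊆ T) (hSm : ↑Sm ⊆ T) :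
    signedProd R Sp Sm ∈ degreeLT R T (Sp.card + Sm.card + 1) := by
  rw [add_assoc]
  exact mul_mem_degreeLT (prod_mem_degreeLT fun i hi => X_mem_degreeLT (hSp hi))
    (prod_mem_degreeLT fun i hi => sub_mem (X_mem_degreeLT (hSm hi))
      (degreeLT_mono subset_rfl one_le_two one_mem_degreeLT))

theorem hasSymbol_prod_X_sub_one (S : Finset ι) :
    HasSymbol S.card (∏ i ∈ S, (X i - 1 : MvPolynomial ι R)) (∏ i ∈ S, X i) := by
  simpa using HasSymbol.prod (s := S) fun i _ => hasSymbol_X_sub_one (R := R) i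

theorem isHomogeneous_prod_X (S : Finset ι) :
    (∏ i ∈ S, X i : MvPolynomial ι R).IsHomogeneous S.card :=
  (hasSymbol_prod_X_sub_one S).isHomogeneous

theorem hasSymbol_signedProd (Sp Sm : Finset ι) : HasSymbol (Sp.card + Sm.card)
    (signedProd R Sp Sm) ((∏ i ∈ Sp, X i) * ∏ i ∈ Sm, X i) :=
  (hasSymbol_self (isHomogeneous_prod_X Sp)).mul (hasSymbol_prod_X_sub_one Sm)

variable [DecidableEq ι]

theorem signedProd_insert_left (hi : i ∉ Sp) :
    signedProd R (insert i Sp) Sm = X i * signedProd R Sp Sm := by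
  rw [signedProd, Finset.prod_insert hi, mul_assoc, signedProd]

theorem signedProd_insert_right (hi : i ∉ Sm) :
    signedProd R Sp (insert i Sm) = (X i - 1) * signedProd R Sp Sm := by
  rw [signedProd, Finset.prod_insert hi, mul_left_comm, signedProd]

/-- The symbol of `∏ X - ∏ (X - 1)` is the derivative of `∏ X` along `(1, …, 1)`; the factor `q`
absorbs the variables in the induction on `S`. -/
theorem hasSymbol_mul_prod_X_sub_prod {d e : ℕ} {q : MvPolynomial ι R} (hq : q.IsHomogeneous e)
    {S : Finset ι} (hS : e + S.card = d + 1) :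
    HasSymbol d (q * (∏ i ∈ S, X i - ∏ i ∈ S, (X i - 1))) (∑ k ∈ S, q * ∏ i ∈ S.erase k, X i) := by
  induction S using Finset.induction_on generalizing e q with
  | empty => simpa using .zero
  | insert a S ha ih =>
    rw [Finset.card_insert_of_notMem ha] at hS
    have hS' : e + S.card = d := by omega
    have hsum : ∑ k ∈ insert a S, q * ∏ i ∈ (insert a S).erase k, X i =
        ∑ k ∈ S, q * X a * ∏ i ∈ S.erase k, X i + q * ∏ i ∈ S, X i := by
      rw [Finset.sum_insert ha, Finset.erase_insert ha, add_comm]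
      refine congrArg (· + _) (Finset.sum_congr rfl fun k hk => ?_)
      rw [Finset.erase_insert_of_ne (ne_of_mem_of_not_mem hk ha).symm,
        Finset.prod_insert (fun h => ha (Finset.mem_of_mem_erase h)), mul_assoc]
    have hdiff : q * (∏ i ∈ insert a S, X i - ∏ i ∈ insert a S, (X i - 1)) =
        q * X a * (∏ i ∈ S, X i - ∏ i ∈ S, (X i - 1)) + q * ∏ i ∈ S, (X i - 1) := by
      rw [Finset.prod_insert ha, Finset.prod_insert ha]
      ring
    rw [hsum, hdiff]
    refine (ih (hq.mul (isHomogeneous_X R a)) (by omega)).add ?_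
    exact hS' ▸ (hasSymbol_self hq).mul (hasSymbol_prod_X_sub_one S)

theorem hasSymbol_signedProd_sub_signedProd {d : ℕ} (hd : Sp.card + Sm.card = d + 1) :
    HasSymbol d (signedProd R Sm Sp - signedProd R Sp Sm)
      ((∑ k ∈ Sm, ((∏ i ∈ Sp, X i) * ∏ j ∈ Sm.erase k, X j)) -
        ∑ k ∈ Sp, ((∏ i ∈ Sp.erase k, X i) * ∏ j ∈ Sm, X j)) := by
  have hdiff : signedProd R Sm Sp - signedProd R Sp Sm =
      (∏ i ∈ Sp, X i) * (∏ i ∈ Sm, X i - ∏ i ∈ Sm, (X i - 1)) -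
        (∏ i ∈ Sm, X i) * (∏ i ∈ Sp, X i - ∏ i ∈ Sp, (X i - 1)) := by
    rw [signedProd, signedProd]
    ring
  have hsum : ∑ k ∈ Sp, ((∏ i ∈ Sp.erase k, X i) * ∏ j ∈ Sm, X j) =
      ∑ k ∈ Sp, (∏ i ∈ Sm, X i) * ∏ i ∈ Sp.erase k, (X i : MvPolynomial ι R) :=
    Finset.sum_congr rfl fun k _ => mul_comm _ _
  rw [hdiff, hsum]
  exact (hasSymbol_mul_prod_X_sub_prod (isHomogeneous_prod_X Sp) hd).sub
    (hasSymbol_mul_prod_X_sub_prod (isHomogeneous_prod_X Sm) (by omega))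

end SignedProd

/-! ### Relations between Heaviside functions -/

section Geometry

variable {ι E : Type*} [AddCommGroup E] [Module ℝ E] {ω : ι → E →ᵃ[ℝ] ℝ} {K : AffineSubspace ℝ E}
  {Sp Sm : Finset ι} {T : Set ι} {n : ι} {v w : E}

/-- The intersection of `K` with the zero locus of the affine form `f`. -/
def cutBy (K : AffineSubspace ℝ E) (f : E →ᵃ[ℝ] ℝ) : AffineSubspace ℝ E :=
  K ⊓ (AffineSubspace.mk' (0 : ℝ) ⊥).comap f

theorem mem_cutBy {f : E →ᵃ[ℝ] ℝ} : v ∈ cutBy K f ↔ v ∈ K ∧ f v = 0 := by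
  simp [cutBy, AffineSubspace.mem_inf_iff, AffineSubspace.mem_comap, AffineSubspace.mem_mk']

/-- The open convex region of `K` where `ω i` is positive for `i ∈ Sp` and negative for
`i ∈ Sm`. -/
def openCell (ω : ι → E →ᵃ[ℝ] ℝ) (K : AffineSubspace ℝ E) (Sp Sm : Finset ι) : Set E :=
  K ∩ ((⋂ i ∈ Sp, ω i ⁻¹' Ioi 0) ∩ ⋂ i ∈ Sm, ω i ⁻¹' Iio 0)

theorem mem_openCell :
    v ∈ openCell ω K Sp Sm ↔ v ∈ K ∧ (∀ i ∈ Sp, 0 < ω i v) ∧ ∀ i ∈ Sm, ω i v < 0 := by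
  simp [openCell]

theorem convex_openCell : Convex ℝ (openCell ω K Sp Sm) :=
  K.convex.inter ((convex_iInter₂ fun i _ => (convex_Ioi 0).affine_preimage (ω i)).inter
    (convex_iInter₂ fun i _ => (convex_Iio 0).affine_preimage (ω i)))

/-- A convex region of `K` that misses the hyperplane `H n` lies on one side of it. -/
theorem openCell_insert_eq_empty_or [DecidableEq ι] (h : openCell ω (cutBy K (ω n)) Sp Sm = ∅) :
    openCell ω K (insert n Sp) Sm = ∅ ∨ openCell ω K Sp (insert n Sm) = ∅ := by
  by_contra! hne
  obtain ⟨⟨v, hv⟩, ⟨w, hw⟩⟩ := hne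
  simp only [mem_openCell, Finset.forall_mem_insert] at hv hw
  have hvC : v ∈ openCell ω K Sp Sm := mem_openCell.2 ⟨hv.1, hv.2.1.2, hv.2.2⟩
  have hwC : w ∈ openCell ω K Sp Sm := mem_openCell.2 ⟨hw.1, hw.2.1, hw.2.2.2⟩
  obtain ⟨z, hz, hzn⟩ : (0 : ℝ) ∈ ω n '' openCell ω K Sp Sm :=
    (convex_openCell.affine_image (ω n)).ordConnected.out (mem_image_of_mem _ hwC)
      (mem_image_of_mem _ hvC) ⟨hw.2.2.1.le, hv.2.1.1.le⟩
  rw [mem_openCell] at hz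
  exact h.subset (mem_openCell.2 ⟨mem_cutBy.2 ⟨hz.1, hzn⟩, hz.2⟩)

theorem exists_openCell_eq_empty [DecidableEq ι] (S : Finset ι)
    (h : ∀ v ∈ K, ∃ i ∈ S, ω i v ≠ 0) :
    ∃ Sp Sm, Disjoint Sp Sm ∧ Sp ∪ Sm = S ∧ openCell ω K Sp Sm = ∅ := by
  induction S using Finset.induction_on generalizing K with
  | empty =>
    refine ⟨∅, ∅, disjoint_bot_left, rfl, eq_empty_of_forall_notMem fun v hv => ?_⟩
    simpa using h v (mem_openCell.1 hv).1
  | insert n S hn ih =>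
    obtain ⟨Sp, Sm, hdisj, rfl, hcell⟩ := ih (K := cutBy K (ω n)) fun v hv => by
      simpa [(mem_cutBy.1 hv).2] using h v (mem_cutBy.1 hv).1
    rw [Finset.notMem_union] at hn
    rcases openCell_insert_eq_empty_or hcell with h' | h'
    · exact ⟨insert n Sp, Sm, Finset.disjoint_insert_left.2 ⟨hn.2, hdisj⟩,
        Finset.insert_union _ _ _, h'⟩
    · exact ⟨Sp, insert n Sm, Finset.disjoint_insert_right.2 ⟨hn.1, hdisj⟩,
        Finset.union_insert _ _ _, h'⟩

theorem apply_lineMap_of_eq_zero {f : E →ᵃ[ℝ] ℝ} (hv : f v = 0) (t : ℝ) :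
    f (AffineMap.lineMap v w t) = t * f w := by
  rw [AffineMap.apply_lineMap, AffineMap.lineMap_apply_ring', hv, sub_zero, add_zero]

/-- Reflection in a common zero exchanges the two opposite cells. -/
theorem openCell_swap_eq_empty [DecidableEq ι] {c : E} (hc : c ∈ K)
    (hzero : ∀ i ∈ Sp ∪ Sm, ω i c = 0) (h : openCell ω K Sp Sm = ∅) :
    openCell ω K Sm Sp = ∅ := by
  refine eq_empty_of_forall_notMem fun v hv => ?_
  refine eq_empty_iff_forall_notMem.1 h (AffineMap.lineMap c v (-1 : ℝ)) ?_
  rw [mem_openCell] at hv ⊢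
  refine ⟨AffineMap.lineMap_mem _ hc hv.1, fun i hi => ?_, fun i hi => ?_⟩
  · rw [apply_lineMap_of_eq_zero (hzero i (Finset.mem_union_left _ hi))]
    linarith [hv.2.2 i hi]
  · rw [apply_lineMap_of_eq_zero (hzero i (Finset.mem_union_right _ hi))]
    linarith [hv.2.1 i hi]

/-- The point `z` is taken on the ray from `v` to `w`, close to `v`. -/
theorem exists_mem_sign_eq (hT : T.Finite) (hv : v ∈ K) (hvn : ω n v = 0)
    (hvT : ∀ i ∈ T, ω i v ≠ 0) (hw : w ∈ K) :
    ∃ z ∈ K, SignType.sign (ω n z) = SignType.sign (ω n w) ∧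
      ∀ i ∈ T, SignType.sign (ω i z) = SignType.sign (ω i v) := by
  have hcont : ∀ i, Continuous fun t : ℝ => ω i (AffineMap.lineMap v w t) := fun i => by
    simp only [AffineMap.apply_lineMap, AffineMap.lineMap_apply_ring']
    fun_prop
  have hnear : ∀ᶠ t : ℝ in nhds 0,
      ∀ i ∈ T, SignType.sign (ω i (AffineMap.lineMap v w t)) = SignType.sign (ω i v) := by
    refine (Filter.eventually_all_finite hT).2 fun i hi => ?_
    have hsign : ContinuousAt (fun t : ℝ => SignType.sign (ω i (AffineMap.lineMap v w t))) 0 :=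
      (continuousAt_sign_of_ne_zero (by simpa using hvT i hi)).comp (hcont i).continuousAt
    simpa using hsign.eventually_mem ((isOpen_discrete {SignType.sign (ω i v)}).mem_nhds (by simp))
  obtain ⟨t, hzT, ht⟩ := ((hnear.filter_mono nhdsWithin_le_nhds).and
    (self_mem_nhdsWithin (s := Ioi 0))).exists
  refine ⟨_, AffineMap.lineMap_mem t hv hw, ?_, hzT⟩
  rw [apply_lineMap_of_eq_zero hvn, sign_mul, sign_pos ht, one_mul]

end Geometry

section HeavisideIdeal

variable {ι E : Type*} [AddCommGroup E] [Module ℝ E] {ω : ι → E →ᵃ[ℝ] ℝ} {K : AffineSubspace ℝ E}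
  {Sp Sm : Finset ι} {T : Set ι} {n : ι} {v w : E} {p q r : MvPolynomial ι ℚ} {k l : ℕ}

/-- The values at `v` of the Heaviside functions of the affine forms `ω i`. -/
noncomputable def heavisideVal (ω : ι → E →ᵃ[ℝ] ℝ) (v : E) (i : ι) : ℚ :=
  if 0 < ω i v then 1 else 0

theorem heavisideVal_of_pos {i : ι} (h : 0 < ω i v) : heavisideVal ω v i = 1 :=
  if_pos h

theorem heavisideVal_of_neg {i : ι} (h : ω i v < 0) : heavisideVal ω v i = 0 :=
  if_neg h.not_gt

theorem heavisideVal_congr {i : ι} (h : SignType.sign (ω i v) = SignType.sign (ω i w)) :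
    heavisideVal ω v i = heavisideVal ω w i := by
  simp only [heavisideVal, ← sign_eq_one_iff, h]

theorem exists_eqOn_heavisideVal (hT : T.Finite) (hv : v ∈ K) (hvn : ω n v = 0)
    (hvT : ∀ i ∈ T, ω i v ≠ 0) (hw : w ∈ K) (hwn : ω n w ≠ 0) {s : SignType} (hs : s ≠ 0) :
    ∃ z ∈ K, SignType.sign (ω n z) = s ∧ (∀ i ∈ insert n T, ω i z ≠ 0) ∧
      EqOn (heavisideVal ω z) (heavisideVal ω v) T := by
  obtain ⟨w', hw', rfl⟩ : ∃ w' ∈ K, SignType.sign (ω n w') = s := by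
    by_cases hws : SignType.sign (ω n w) = s
    · exact ⟨w, hw, hws⟩
    · refine ⟨AffineMap.lineMap v w (-1 : ℝ), AffineMap.lineMap_mem _ hv hw, ?_⟩
      rw [apply_lineMap_of_eq_zero hvn, neg_one_mul, Left.sign_neg]
      rw [← sign_ne_zero] at hwn
      revert hwn hs hws
      generalize SignType.sign (ω n w) = s'
      decide +revert
  obtain ⟨z, hz, hzn, hzT⟩ := exists_mem_sign_eq hT hv hvn hvT hw'
  refine ⟨z, hz, hzn, forall_mem_insert.2 ⟨?_, fun i hi => ?_⟩,
    fun i hi => heavisideVal_congr (hzT i hi)⟩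
  · rwa [← sign_ne_zero, hzn]
  · rw [← sign_ne_zero, hzT i hi, sign_ne_zero]
    exact hvT i hi

/-- The ideal of relations between the Heaviside functions of the hyperplanes `H i`, `i ∈ T`,
on the complement of these hyperplanes in `K`. -/
noncomputable def heavisideIdeal (ω : ι → E →ᵃ[ℝ] ℝ) (T : Set ι) (K : AffineSubspace ℝ E) :
    Ideal (MvPolynomial ι ℚ) :=
  vanishingIdeal ℚ (heavisideVal ω '' {v | v ∈ K ∧ ∀ i ∈ T, ω i v ≠ 0})

theorem mem_heavisideIdeal : p ∈ heavisideIdeal ω T K ↔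
    ∀ v ∈ K, (∀ i ∈ T, ω i v ≠ 0) → eval (heavisideVal ω v) p = 0 := by
  simp only [heavisideIdeal, mem_vanishingIdeal_iff, forall_mem_image, aeval_eq_eval,
    mem_ofPred_eq, and_imp]

/-- The difference of the values of `q + X n * r` on the two sides of `H n` is the value of `r`. -/
theorem mem_heavisideIdeal_cutBy (hT : T.Finite) (hq : q ∈ degreeLT ℚ T k)
    (hr : r ∈ degreeLT ℚ T l) (h : q + X n * r ∈ heavisideIdeal ω (insert n T) K) (hw : w ∈ K)
    (hwn : ω n w ≠ 0) : r ∈ heavisideIdeal ω T (cutBy K (ω n)) := by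
  rw [mem_heavisideIdeal] at h ⊢
  intro v hv hvT
  rw [mem_cutBy] at hv
  obtain ⟨z, hz, hzn, hz0, hzv⟩ :=
    exists_eqOn_heavisideVal hT hv.1 hv.2 hvT hw hwn (s := 1) (by decide)
  obtain ⟨z', hz', hzn', hz0', hzv'⟩ :=
    exists_eqOn_heavisideVal hT hv.1 hv.2 hvT hw hwn (s := -1) (by decide)
  have hpos := h z hz hz0
  have hneg := h z' hz' hz0'
  rw [map_add, map_mul, eval_X, eval_eq_of_eqOn hq hzv, eval_eq_of_eqOn hr hzv,
    heavisideVal_of_pos (sign_eq_one_iff.1 hzn)] at hpos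
  rw [map_add, map_mul, eval_X, eval_eq_of_eqOn hq hzv', eval_eq_of_eqOn hr hzv',
    heavisideVal_of_neg (sign_eq_neg_one_iff.1 hzn')] at hneg
  linarith

theorem mem_heavisideIdeal_of_insert (hT : T.Finite) (hq : q ∈ degreeLT ℚ T k)
    (h : q ∈ heavisideIdeal ω (insert n T) K) (hw : w ∈ K) (hwn : ω n w ≠ 0) :
    q ∈ heavisideIdeal ω T K := by
  rw [mem_heavisideIdeal] at h ⊢
  intro v hv hvT
  by_cases hvn : ω n v = 0
  · obtain ⟨z, hz, -, hz0, hzv⟩ :=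
      exists_eqOn_heavisideVal hT hv hvn hvT hw hwn (one_ne_zero (α := SignType))
    rw [← eval_eq_of_eqOn hq hzv]
    exact h z hz hz0
  · exact h v hv (forall_mem_insert.2 ⟨hvn, hvT⟩)

theorem signedProd_mem_heavisideIdeal (hSm : ↑Sm ⊆ T)
    (hcell : openCell ω K Sp Sm = ∅) : signedProd ℚ Sp Sm ∈ heavisideIdeal ω T K := by
  refine mem_heavisideIdeal.2 fun v hv hvT => ?_
  by_contra hne
  simp only [signedProd, map_mul, map_prod, map_sub, map_one, eval_X, mul_eq_zero,
    Finset.prod_eq_zero_iff, not_or, not_exists, not_and] at hne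
  refine eq_empty_iff_forall_notMem.1 hcell v (mem_openCell.2 ⟨hv, fun i hi => ?_, fun i hi => ?_⟩)
  · by_contra h
    exact hne.1 i hi (if_neg h)
  · refine (hvT i (hSm hi)).lt_of_le (not_lt.1 fun h => hne.2 i hi ?_)
    rw [heavisideVal_of_pos h, sub_self]

end HeavisideIdeal

/-! ### Deletion and restriction -/

section Relations

variable {ι E : Type*} [DecidableEq ι] [AddCommGroup E] [Module ℝ E] {ω : ι → E →ᵃ[ℝ] ℝ}
  {K : AffineSubspace ℝ E} {S T : Set ι} {Sp Sm : Finset ι} {n : ι} {w : E}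
  {p q f g : MvPolynomial ι ℚ} {d e k l : ℕ}

/-- The relations between the Heaviside functions of the hyperplanes `H i ∩ K`, `i ∈ T`, whose
symbols are the generators of the ideal defining `B`. The index is the degree of the symbol. -/
inductive IsRelation (ω : ι → E →ᵃ[ℝ] ℝ) (T : Set ι) (K : AffineSubspace ℝ E) :
    ℕ → MvPolynomial ι ℚ → Prop
  | idempotent {i : ι} (hi : i ∈ T) : IsRelation ω T K 2 (X i ^ 2 - X i)
  | noncentral {d : ℕ} {Sp Sm : Finset ι} (hSp : ↑Sp ⊆ T) (hSm : ↑Sm ⊆ T) (hdisj : Disjoint Sp Sm)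
      (hcell : openCell ω K Sp Sm = ∅) (hzero : ∀ v ∈ K, ∃ i ∈ Sp ∪ Sm, ω i v ≠ 0)
      (hd : Sp.card + Sm.card = d) : IsRelation ω T K d (signedProd ℚ Sp Sm)
  | circuit {d : ℕ} {Sp Sm : Finset ι} (hSp : ↑Sp ⊆ T) (hSm : ↑Sm ⊆ T) (hdisj : Disjoint Sp Sm)
      (hcell : openCell ω K Sp Sm = ∅) (hzero : ∃ c ∈ K, ∀ i ∈ Sp ∪ Sm, ω i c = 0)
      (hd : Sp.card + Sm.card = d + 1) :
      IsRelation ω T K d (signedProd ℚ Sm Sp - signedProd ℚ Sp Sm)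

theorem IsRelation.mono (hST : S ⊆ T) (hg : IsRelation ω S K e g) : IsRelation ω T K e g := by
  cases hg with
  | idempotent hi => exact .idempotent (hST hi)
  | noncentral hSp hSm hdisj hcell hzero hd =>
    exact .noncentral (hSp.trans hST) (hSm.trans hST) hdisj hcell hzero hd
  | circuit hSp hSm hdisj hcell hzero hd =>
    exact .circuit (hSp.trans hST) (hSm.trans hST) hdisj hcell hzero hd

theorem IsRelation.mem_heavisideIdeal (hg : IsRelation ω T K e g) : g ∈ heavisideIdeal ω T K := by
  cases hg with
  | @idempotent i hi =>
    refine _root_.mem_heavisideIdeal.2 fun v _ _ => ?_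
    by_cases h : 0 < ω i v <;> simp [heavisideVal, h]
  | noncentral _ hSm _ hcell _ _ => exact signedProd_mem_heavisideIdeal hSm hcell
  | circuit hSp hSm _ hcell hzero _ =>
    obtain ⟨c, hc, hzero⟩ := hzero
    exact sub_mem (signedProd_mem_heavisideIdeal hSp (openCell_swap_eq_empty hc hzero hcell))
      (signedProd_mem_heavisideIdeal hSm hcell)

theorem IsRelation.mem_initialIdeal (hp : IsRelation ω T K e p) (hpg : HasSymbol e p g) :
    g ∈ initialIdeal (heavisideIdeal ω T K) :=
  Submodule.subset_span ⟨e, p, hp.mem_heavisideIdeal, hpg⟩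

/-- The span of the products `f * g` with `g` a relation and `deg f + deg g < k`. The bound is on
each product and not only on their sum, so symbols of elements can be computed termwise. -/
noncomputable def relationSpan (ω : ι → E →ᵃ[ℝ] ℝ) (T : Set ι) (K : AffineSubspace ℝ E) (k : ℕ) :
    Submodule ℚ (MvPolynomial ι ℚ) :=
  Submodule.span ℚ {p | ∃ d e f g, d + e < k ∧ f ∈ degreeLT ℚ T (d + 1) ∧ IsRelation ω T K e g ∧
    f * g = p}

theorem mul_mem_relationSpan_of_isRelation (hf : f ∈ degreeLT ℚ T (d + 1))
    (hg : IsRelation ω T K e g) (hk : d + e < k) : f * g ∈ relationSpan ω T K k :=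
  Submodule.subset_span ⟨d, e, f, g, hk, hf, hg, rfl⟩

theorem IsRelation.mem_relationSpan (hg : IsRelation ω T K e g) (hk : e < k) :
    g ∈ relationSpan ω T K k := by
  simpa using mul_mem_relationSpan_of_isRelation one_mem_degreeLT hg (by omega)

theorem relationSpan_mono (hT : S ⊆ T) (hk : k ≤ l) :
    relationSpan ω S K k ≤ relationSpan ω T K l := by
  refine Submodule.span_mono ?_
  rintro _ ⟨d, e, f, g, hde, hf, hg, rfl⟩
  exact ⟨d, e, f, g, hde.trans_le hk, degreeLT_mono hT le_rfl hf, hg.mono hT, rfl⟩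

theorem mul_mem_relationSpan (hf : f ∈ degreeLT ℚ T (d + 1)) (hp : p ∈ relationSpan ω T K k) :
    f * p ∈ relationSpan ω T K (d + k) := by
  induction hp using Submodule.span_induction with
  | mem p hp =>
    obtain ⟨d', e, f', g, hde, hf', hg, rfl⟩ := hp
    have hff' := mul_mem_degreeLT hf hf'
    rw [← add_assoc] at hff'
    rw [← mul_assoc]
    exact mul_mem_relationSpan_of_isRelation hff' hg (by omega)
  | zero => simp
  | add p q _ _ hp hq => simpa [mul_add] using add_mem hp hq
  | smul a p _ hp => simpa using Submodule.smul_mem _ a hp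

theorem relationSpan_le_heavisideIdeal :
    relationSpan ω T K k ≤ (heavisideIdeal ω T K).restrictScalars ℚ := by
  refine Submodule.span_le.2 ?_
  rintro _ ⟨d, e, f, g, -, -, hg, rfl⟩
  exact Ideal.mul_mem_left _ f hg.mem_heavisideIdeal

theorem degreeLT_le_relationSpan (h : IsRelation ω T K 0 1) :
    degreeLT ℚ T k ≤ relationSpan ω T K k := by
  intro p hp
  cases k with
  | zero => simp_all [degreeLT_zero]
  | succ k => simpa using mul_mem_relationSpan_of_isRelation hp h k.lt_succ_self

theorem isRelation_one_bot : IsRelation ω T ⊥ 0 1 := by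
  have h : IsRelation ω T ⊥ 0 (signedProd ℚ ∅ ∅) :=
    .noncentral (by simp) (by simp) (by simp) (by simp [openCell])
      (fun v hv => absurd hv (AffineSubspace.notMem_bot ℝ E v)) rfl
  simpa [signedProd] using h

theorem isRelation_one_of_forall_apply_eq_zero (hn : n ∈ T) (hw : w ∈ K)
    (hzero : ∀ v ∈ K, ω n v = 0) : IsRelation ω T K 0 1 := by
  have hcell : openCell ω K ∅ {n} = ∅ := eq_empty_of_forall_notMem fun v hv => by
    rw [mem_openCell] at hv
    exact (hv.2.2 n (Finset.mem_singleton_self n)).ne (hzero v hv.1)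
  have h : IsRelation ω T K 0 (signedProd ℚ {n} ∅ - signedProd ℚ ∅ {n}) :=
    .circuit (by simp) (by simpa using hn) (by simp) hcell ⟨w, hw, by simpa using hzero w hw⟩ rfl
  simpa [signedProd] using h

theorem X_pow_succ_mul_sub_mem_relationSpan {l : ℕ} (hn : n ∈ T) (hq : q ∈ degreeLT ℚ T (l + 1))
    (a : ℕ) : X n ^ (a + 1) * q - X n * q ∈ relationSpan ω T K (a + l + 2) := by
  induction a with
  | zero => simp
  | succ a ih =>
    have hXa : (X n ^ a : MvPolynomial ι ℚ) ∈ degreeLT ℚ T (a + 1) := by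
      simpa using prod_mem_degreeLT (s := Finset.range a) fun _ _ => X_mem_degreeLT hn
    have hXaq := mul_mem_degreeLT hXa hq
    rw [← add_assoc] at hXaq
    have hstep : X n ^ a * q * (X n ^ 2 - X n) ∈ relationSpan ω T K (a + 1 + l + 2) :=
      mul_mem_relationSpan_of_isRelation hXaq (.idempotent hn) (by omega)
    convert add_mem hstep (relationSpan_mono subset_rfl (by omega) ih) using 1
    ring

theorem exists_add_X_mul_add_of_mem_degreeLT_insert
    (hp : p ∈ degreeLT ℚ (insert n T) (k + 1)) :
    ∃ q ∈ degreeLT ℚ T (k + 1), ∃ r ∈ degreeLT ℚ T k, ∃ ρ ∈ relationSpan ω (insert n T) K (k + 1),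
      q + X n * r + ρ = p := by
  rw [degreeLT, restrictSupport_eq_span] at hp
  induction hp using Submodule.span_induction with
  | mem p hp =>
    obtain ⟨m, ⟨hmT, hmk⟩, rfl⟩ := hp
    obtain ⟨a, l, hal, q, hq, hm⟩ := exists_monomial_eq_X_pow_mul (R := ℚ) hmT
    change m.degree < k + 1 at hmk
    simp only [hm]
    rcases a with _ | a
    · exact ⟨q, degreeLT_mono subset_rfl (by omega) hq, 0, zero_mem _, 0, zero_mem _, by simp⟩
    · exact ⟨0, zero_mem _, q, degreeLT_mono subset_rfl (by omega) hq, _,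
        relationSpan_mono subset_rfl (by omega) (X_pow_succ_mul_sub_mem_relationSpan
          (mem_insert n T) (degreeLT_mono (subset_insert n T) le_rfl hq) a), by ring⟩
  | zero => exact ⟨0, zero_mem _, 0, zero_mem _, 0, zero_mem _, by simp⟩
  | add p p' _ _ hp hp' =>
    obtain ⟨q, hq, r, hr, ρ, hρ, rfl⟩ := hp
    obtain ⟨q', hq', r', hr', ρ', hρ', rfl⟩ := hp'
    exact ⟨q + q', add_mem hq hq', r + r', add_mem hr hr', ρ + ρ', add_mem hρ hρ', by ring⟩
  | smul a p _ hp =>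
    obtain ⟨q, hq, r, hr, ρ, hρ, rfl⟩ := hp
    exact ⟨a • q, Submodule.smul_mem _ a hq, a • r, Submodule.smul_mem _ a hr, a • ρ,
      Submodule.smul_mem _ a hρ, by simp [smul_add]⟩

theorem exists_lift_of_noncentral (hnp : n ∉ Sp) (hnm : n ∉ Sm) (hSp : ↑Sp ⊆ T) (hSm : ↑Sm ⊆ T)
    (hdisj : Disjoint Sp Sm) (hcell : openCell ω (cutBy K (ω n)) Sp Sm = ∅)
    (hzero : ∀ v ∈ cutBy K (ω n), ∃ i ∈ Sp ∪ Sm, ω i v ≠ 0) (hd : Sp.card + Sm.card = d) :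
    ∃ h ∈ degreeLT ℚ T (d + 2),
      IsRelation ω (insert n T) K (d + 1) (X n * signedProd ℚ Sp Sm - h) := by
  have hzero' : ∀ v ∈ K, ∃ i ∈ insert n (Sp ∪ Sm), ω i v ≠ 0 := fun v hv => by
    by_cases hvn : ω n v = 0
    · obtain ⟨i, hi, hvi⟩ := hzero v (mem_cutBy.2 ⟨hv, hvn⟩)
      exact ⟨i, Finset.mem_insert_of_mem hi, hvi⟩
    · exact ⟨n, Finset.mem_insert_self _ _, hvn⟩
  rcases openCell_insert_eq_empty_or hcell with h | h
  · refine ⟨0, zero_mem _, ?_⟩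
    rw [sub_zero, ← signedProd_insert_left hnp]
    refine .noncentral ?_ (hSm.trans (subset_insert n T))
      (Finset.disjoint_insert_left.2 ⟨hnm, hdisj⟩) h ?_ ?_
    · simpa using insert_subset_insert hSp
    · simpa using hzero'
    · rw [Finset.card_insert_of_notMem hnp]
      omega
  · refine ⟨signedProd ℚ Sp Sm,
      degreeLT_mono subset_rfl (by omega) (signedProd_mem_degreeLT hSp hSm), ?_⟩
    rw [← sub_one_mul, ← signedProd_insert_right hnm]
    refine .noncentral (hSp.trans (subset_insert n T)) ?_
      (Finset.disjoint_insert_right.2 ⟨hnp, hdisj⟩) h ?_ ?_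
    · simpa using insert_subset_insert hSm
    · simpa using hzero'
    · rw [Finset.card_insert_of_notMem hnm]
      omega

theorem exists_lift_of_circuit (hnp : n ∉ Sp) (hnm : n ∉ Sm) (hSp : ↑Sp ⊆ T) (hSm : ↑Sm ⊆ T)
    (hdisj : Disjoint Sp Sm) (hcell : openCell ω (cutBy K (ω n)) Sp Sm = ∅)
    (hzero : ∃ c ∈ cutBy K (ω n), ∀ i ∈ Sp ∪ Sm, ω i c = 0) (hd : Sp.card + Sm.card = d + 1) :
    ∃ h ∈ degreeLT ℚ T (d + 2), IsRelation ω (insert n T) K (d + 1)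
      (X n * (signedProd ℚ Sm Sp - signedProd ℚ Sp Sm) - h) := by
  obtain ⟨c, hc, hzero⟩ := hzero
  rw [mem_cutBy] at hc
  have hzero' : ∀ i ∈ insert n (Sp ∪ Sm), ω i c = 0 :=
    (Finset.forall_mem_insert _ _ _).2 ⟨hc.2, hzero⟩
  rcases openCell_insert_eq_empty_or hcell with h | h
  · refine ⟨signedProd ℚ Sm Sp,
      degreeLT_mono subset_rfl (by omega) (signedProd_mem_degreeLT hSm hSp), ?_⟩
    rw [show X n * (signedProd ℚ Sm Sp - signedProd ℚ Sp Sm) - signedProd ℚ Sm Sp =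
      signedProd ℚ Sm (insert n Sp) - signedProd ℚ (insert n Sp) Sm by
        rw [signedProd_insert_left hnp, signedProd_insert_right hnp]; ring]
    refine .circuit ?_ (hSm.trans (subset_insert n T))
      (Finset.disjoint_insert_left.2 ⟨hnm, hdisj⟩) h ⟨c, hc.1, ?_⟩ ?_
    · simpa using insert_subset_insert hSp
    · simpa using hzero'
    · rw [Finset.card_insert_of_notMem hnp]
      omega
  · refine ⟨-signedProd ℚ Sp Sm,
      neg_mem (degreeLT_mono subset_rfl (by omega) (signedProd_mem_degreeLT hSp hSm)), ?_⟩
    rw [show X n * (signedProd ℚ Sm Sp - signedProd ℚ Sp Sm) - -signedProd ℚ Sp Sm =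
      signedProd ℚ (insert n Sm) Sp - signedProd ℚ Sp (insert n Sm) by
        rw [signedProd_insert_left hnm, signedProd_insert_right hnm]; ring]
    refine .circuit (hSp.trans (subset_insert n T)) ?_
      (Finset.disjoint_insert_right.2 ⟨hnp, hdisj⟩) h ⟨c, hc.1, ?_⟩ ?_
    · simpa using insert_subset_insert hSm
    · simpa using hzero'
    · rw [Finset.card_insert_of_notMem hnm]
      omega

theorem IsRelation.exists_lift (hn : n ∉ T) (hg : IsRelation ω T (cutBy K (ω n)) e g) :
    ∃ h ∈ degreeLT ℚ T (e + 2), X n * g - h ∈ relationSpan ω (insert n T) K (e + 2) := by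
  cases hg with
  | idempotent hi =>
    refine ⟨0, zero_mem _, ?_⟩
    rw [sub_zero]
    exact mul_mem_relationSpan_of_isRelation (d := 1) (X_mem_degreeLT (mem_insert n T))
      (.idempotent (mem_insert_of_mem n hi)) (by omega)
  | noncentral hSp hSm hdisj hcell hzero hd =>
    obtain ⟨h, hh, hrel⟩ := exists_lift_of_noncentral (fun hi => hn (hSp hi))
      (fun hi => hn (hSm hi)) hSp hSm hdisj hcell hzero hd
    exact ⟨h, hh, hrel.mem_relationSpan (by omega)⟩
  | circuit hSp hSm hdisj hcell hzero hd =>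
    obtain ⟨h, hh, hrel⟩ := exists_lift_of_circuit (fun hi => hn (hSp hi))
      (fun hi => hn (hSm hi)) hSp hSm hdisj hcell hzero hd
    exact ⟨h, hh, hrel.mem_relationSpan (by omega)⟩

theorem exists_lift_of_mem_relationSpan (hn : n ∉ T)
    (hp : p ∈ relationSpan ω T (cutBy K (ω n)) k) :
    ∃ h ∈ degreeLT ℚ T (k + 1), X n * p - h ∈ relationSpan ω (insert n T) K (k + 1) := by
  induction hp using Submodule.span_induction with
  | mem p hp =>
    obtain ⟨d, e, f, g, hde, hf, hg, rfl⟩ := hp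
    obtain ⟨h, hh, hgh⟩ := hg.exists_lift hn
    refine ⟨f * h, degreeLT_mono subset_rfl (by omega) (mul_mem_degreeLT hf hh), ?_⟩
    rw [show X n * (f * g) - f * h = f * (X n * g - h) by ring]
    exact relationSpan_mono subset_rfl (by omega)
      (mul_mem_relationSpan (degreeLT_mono (subset_insert n T) le_rfl hf) hgh)
  | zero => exact ⟨0, zero_mem _, by simp⟩
  | add p q _ _ hp hq =>
    obtain ⟨h, hh, hph⟩ := hp
    obtain ⟨h', hh', hqh'⟩ := hq
    exact ⟨h + h', add_mem hh hh', by simpa [mul_add, add_sub_add_comm] using add_mem hph hqh'⟩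
  | smul a p _ hp =>
    obtain ⟨h, hh, hph⟩ := hp
    exact ⟨a • h, Submodule.smul_mem _ a hh, by simpa [smul_sub] using Submodule.smul_mem _ a hph⟩

/-- The step of deletion and restriction: `r` is a relation on the restriction to `H n`, and
after subtracting a lift of `X n * r` only a relation of the deletion of `H n` is left. -/
theorem mem_relationSpan_insert (hT : T.Finite) (hn : n ∉ T) (hw : w ∈ K) (hwn : ω n w ≠ 0)
    (hrestr : ∀ {j : ℕ} {r}, r ∈ degreeLT ℚ T j → r ∈ heavisideIdeal ω T (cutBy K (ω n)) →
      r ∈ relationSpan ω T (cutBy K (ω n)) j)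
    (hdel : ∀ {j : ℕ} {q}, q ∈ degreeLT ℚ T j → q ∈ heavisideIdeal ω T K →
      q ∈ relationSpan ω T K j)
    (hp : p ∈ degreeLT ℚ (insert n T) (k + 1)) (hpJ : p ∈ heavisideIdeal ω (insert n T) K) :
    p ∈ relationSpan ω (insert n T) K (k + 1) := by
  obtain ⟨q, hq, r, hr, ρ, hρ, rfl⟩ :=
    exists_add_X_mul_add_of_mem_degreeLT_insert (ω := ω) (K := K) hp
  have hqr : q + X n * r ∈ heavisideIdeal ω (insert n T) K := by
    rw [← add_sub_cancel_right (q + X n * r) ρ]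
    exact sub_mem hpJ (relationSpan_le_heavisideIdeal hρ)
  obtain ⟨h, hh, hrh⟩ := exists_lift_of_mem_relationSpan hn
    (hrestr hr (mem_heavisideIdeal_cutBy hT hq hr hqr hw hwn))
  have hqh : q + h ∈ heavisideIdeal ω (insert n T) K := by
    convert sub_mem hqr (relationSpan_le_heavisideIdeal hrh) using 1
    ring
  have hqh' : q + h ∈ relationSpan ω T K (k + 1) :=
    hdel (add_mem hq hh) (mem_heavisideIdeal_of_insert hT (add_mem hq hh) hqh hw hwn)
  convert add_mem (add_mem (relationSpan_mono (subset_insert n T) le_rfl hqh') hrh) hρ using 1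
  ring

theorem mem_relationSpan (hT : T.Finite) (hp : p ∈ degreeLT ℚ T k)
    (hpJ : p ∈ heavisideIdeal ω T K) : p ∈ relationSpan ω T K k := by
  induction T, hT using Set.Finite.induction_on generalizing K k p with
  | empty =>
    obtain rfl | ⟨w, hw⟩ := K.eq_bot_or_nonempty
    · exact degreeLT_le_relationSpan isRelation_one_bot hp
    · have hp0 : p = 0 := MvPolynomial.funext fun x => by
        rw [eval_eq_of_eqOn hp (eqOn_empty x (heavisideVal ω w)), map_zero]
        exact mem_heavisideIdeal.1 hpJ w hw (by simp)
      simp [hp0]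
  | @insert n T hn hT ih =>
    obtain rfl | ⟨w, hw⟩ := K.eq_bot_or_nonempty
    · exact degreeLT_le_relationSpan isRelation_one_bot hp
    by_cases hzero : ∀ v ∈ K, ω n v = 0
    · exact degreeLT_le_relationSpan
        (isRelation_one_of_forall_apply_eq_zero (mem_insert n T) hw hzero) hp
    push Not at hzero
    obtain ⟨w, hw, hwn⟩ := hzero
    cases k with
    | zero => simp_all [degreeLT_zero]
    | succ k => exact mem_relationSpan_insert hT hn hw hwn ih ih hp hpJ

end Relations

/-! ### The associated graded algebra -/

section InitialIdeal

variable {E : Type*} [NormedAddCommGroup E] [NormedSpace ℝ E] {ω : Fin n → E →ᵃ[ℝ] ℝ}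
  {S Sp Sm : Finset (Fin n)} {e k : ℕ} {p g : MvPolynomial (Fin n) ℚ}

theorem iInter_Hyp_eq_empty_iff : ⋂ i ∈ S, Hyp ω i = ∅ ↔
    ∀ v ∈ (⊤ : AffineSubspace ℝ E), ∃ i ∈ S, ω i v ≠ 0 := by
  simp [eq_empty_iff_forall_notMem, Hyp]

theorem iInter_Hyp_ne_empty_iff : ⋂ i ∈ S, Hyp ω i ≠ ∅ ↔
    ∃ c ∈ (⊤ : AffineSubspace ℝ E), ∀ i ∈ S, ω i c = 0 := by
  simp [Ne, iInter_Hyp_eq_empty_iff]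

theorem openCell_top : openCell ω ⊤ Sp Sm = (⋂ i ∈ Sp, Hplus ω i) ∩ ⋂ i ∈ Sm, Hminus ω i :=
  univ_inter _

theorem IsRelation.exists_hasSymbol (hg : IsRelation ω univ ⊤ e g) :
    ∃ s ∈ bIdeal (Hyp ω) (Hplus ω) (Hminus ω), HasSymbol e g s := by
  cases hg with
  | @idempotent i _ =>
    exact ⟨X i ^ 2, Submodule.subset_span (.inl (.inl ⟨i, rfl⟩)), hasSymbol_X_sq_sub_X i⟩
  | @noncentral _ Sp Sm _ _ hdisj _ hzero hd =>
    refine ⟨_, Submodule.subset_span (.inl (.inr ⟨Sp ∪ Sm, iInter_Hyp_eq_empty_iff.2 hzero, rfl⟩)),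
      ?_⟩
    rw [Finset.prod_union hdisj, ← hd]
    exact hasSymbol_signedProd Sp Sm
  | @circuit _ Sp Sm _ _ hdisj hcell hzero hd =>
    rw [openCell_top] at hcell
    exact ⟨_, Submodule.subset_span (.inr ⟨Sp, Sm, hdisj, hcell,
      iInter_Hyp_ne_empty_iff.2 hzero, rfl⟩), hasSymbol_signedProd_sub_signedProd hd⟩

theorem exists_hasSymbol_of_mem_relationSpan (hp : p ∈ relationSpan ω univ ⊤ (k + 1)) :
    ∃ s ∈ bIdeal (Hyp ω) (Hplus ω) (Hminus ω), HasSymbol k p s := by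
  induction hp using Submodule.span_induction with
  | mem p hp =>
    obtain ⟨d, e, f, g, hde, hf, hg, rfl⟩ := hp
    obtain ⟨s, hs, hgs⟩ := hg.exists_hasSymbol
    have hfg := (hasSymbol_homogeneousComponent hf).mul hgs
    rcases (Nat.le_of_lt_succ hde).eq_or_lt with rfl | hlt
    · exact ⟨_, Ideal.mul_mem_left _ _ hs, hfg⟩
    · exact ⟨0, zero_mem _, .of_mem_degreeLT (degreeLT_mono subset_rfl hlt hfg.mem_degreeLT)⟩
  | zero => exact ⟨0, zero_mem _, .zero⟩
  | add p q _ _ hp hq =>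
    obtain ⟨s, hs, hps⟩ := hp
    obtain ⟨s', hs', hqs'⟩ := hq
    exact ⟨s + s', add_mem hs hs', hps.add hqs'⟩
  | smul a p _ hp =>
    obtain ⟨s, hs, hps⟩ := hp
    refine ⟨C a * s, Ideal.mul_mem_left _ _ hs, ?_⟩
    simpa [C_mul'] using (hasSymbol_self (isHomogeneous_C _ a)).mul hps

theorem bFam2_subset_initialIdeal :
    bFam2 (Hyp ω) ⊆ initialIdeal (heavisideIdeal ω univ ⊤) := by
  rintro _ ⟨S, hS, rfl⟩
  rw [iInter_Hyp_eq_empty_iff] at hS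
  obtain ⟨Sp, Sm, hdisj, rfl, hcell⟩ := exists_openCell_eq_empty S hS
  rw [Finset.prod_union hdisj]
  exact (IsRelation.noncentral (subset_univ _) (subset_univ _) hdisj hcell hS rfl).mem_initialIdeal
    (hasSymbol_signedProd Sp Sm)

theorem bFam3_subset_initialIdeal :
    bFam3 (Hyp ω) (Hplus ω) (Hminus ω) ⊆ initialIdeal (heavisideIdeal ω univ ⊤) := by
  rintro _ ⟨Sp, Sm, hdisj, hcell, hzero, rfl⟩
  rw [iInter_Hyp_ne_empty_iff] at hzero
  rw [← openCell_top] at hcell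
  rcases hd : Sp.card + Sm.card with _ | d
  · obtain ⟨rfl, rfl⟩ : Sp = ∅ ∧ Sm = ∅ := by simpa using hd
    simp
  · exact (IsRelation.circuit (subset_univ _) (subset_univ _) hdisj hcell hzero hd).mem_initialIdeal
      (hasSymbol_signedProd_sub_signedProd hd)

theorem initialIdeal_heavisideIdeal :
    initialIdeal (heavisideIdeal ω univ ⊤) = bIdeal (Hyp ω) (Hplus ω) (Hminus ω) := by
  refine le_antisymm (Submodule.span_le.2 ?_) (Submodule.span_le.2
    (union_subset (union_subset ?_ bFam2_subset_initialIdeal) bFam3_subset_initialIdeal))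
  · rintro g ⟨k, p, hp, hpg⟩
    obtain ⟨s, hs, hps⟩ :=
      exists_hasSymbol_of_mem_relationSpan (mem_relationSpan finite_univ hpg.mem_degreeLT hp)
    exact hpg.eq hps ▸ hs
  · rintro _ ⟨i, rfl⟩
    exact (IsRelation.idempotent (mem_univ i)).mem_initialIdeal (hasSymbol_X_sq_sub_X i)

/-- The quotient map from the homogeneous polynomials of degree `k` to `B(𝒜)ₖ`. -/
noncomputable def toB (ω : Fin n → E →ᵃ[ℝ] ℝ) (k : ℕ) :
    homogeneousSubmodule (Fin n) ℚ k →ₗ[ℚ] bGrade (Hyp ω) (Hplus ω) (Hminus ω) k :=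
  (Ideal.Quotient.mkₐ ℚ (bIdeal (Hyp ω) (Hplus ω) (Hminus ω))).toLinearMap.restrict fun _ hp =>
    Submodule.mem_map_of_mem hp

theorem toB_surjective (ω : Fin n → E →ᵃ[ℝ] ℝ) (k : ℕ) : Function.Surjective (toB ω k) := by
  rintro ⟨_, p, hp, rfl⟩
  exact ⟨⟨p, hp⟩, rfl⟩

end InitialIdeal

section Graded

variable {ω : Fin n → V →ᵃ[ℝ] ℝ} {k l : ℕ} {p : MvPolynomial (Fin n) ℚ}
  {a b : LocallyConstant (M₁ ω) ℚ}

theorem aeval_heaviside_apply (p : MvPolynomial (Fin n) ℚ) (v : M₁ ω) :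
    aeval (heaviside ω) p v = eval (heavisideVal ω v) p := by
  induction p using MvPolynomial.induction_on with
  | C a => simp
  | add p q hp hq => simp [hp, hq]
  | mul_X p i hp => simp [hp, heavisideVal, heaviside]

theorem aeval_heaviside_eq_zero_iff :
    aeval (heaviside ω) p = 0 ↔ p ∈ heavisideIdeal ω univ ⊤ := by
  rw [LocallyConstant.ext_iff, mem_heavisideIdeal]
  simp only [aeval_heaviside_apply, Subtype.forall]
  exact ⟨fun h v _ hv => h v fun i => hv i (mem_univ i),
    fun h v hv => h v (AffineSubspace.mem_top ℝ V v) fun i _ => hv i⟩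

theorem mem_vgFil :
    a ∈ vgFil ω k ↔ ∃ p ∈ degreeLT ℚ univ (k + 1), aeval (heaviside ω) p = a := by
  rw [vgFil, restrictTotalDegree_eq_degreeLT]
  rfl

theorem mem_vgPrev : a ∈ vgPrev ω k ↔ ∃ p ∈ degreeLT ℚ univ k, aeval (heaviside ω) p = a := by
  cases k with
  | zero => simp [vgPrev, degreeLT_zero, eq_comm]
  | succ k => exact mem_vgFil

theorem mul_mem_vgPrev (ha : a ∈ vgFil ω k) (hb : b ∈ vgPrev ω l) : a * b ∈ vgPrev ω (k + l) := by
  obtain ⟨p, hp, rfl⟩ := mem_vgFil.1 ha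
  obtain ⟨q, hq, rfl⟩ := mem_vgPrev.1 hb
  exact mem_vgPrev.2 ⟨p * q, mul_mem_degreeLT hp hq, map_mul _ _ _⟩

theorem aeval_mem_vgPrev_iff (hp : p.IsHomogeneous k) : aeval (heaviside ω) p ∈ vgPrev ω k ↔
    p ∈ bIdeal (Hyp ω) (Hplus ω) (Hminus ω) := by
  rw [mem_vgPrev, ← initialIdeal_heavisideIdeal, mem_initialIdeal_iff_of_isHomogeneous hp]
  constructor
  · rintro ⟨q, hq, hqp⟩
    refine ⟨p - q, ?_, hp, by simpa using hq⟩
    rw [← aeval_heaviside_eq_zero_iff, map_sub, hqp, sub_self]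
  · rintro ⟨q, hq, hqp⟩
    refine ⟨p - q, neg_sub q p ▸ neg_mem hqp.sub_mem_degreeLT, ?_⟩
    rw [map_sub, aeval_heaviside_eq_zero_iff.2 hq, sub_zero]

/-- Evaluation at the Heaviside functions, as a map from the homogeneous polynomials of degree `k`
to `Pᵏ`. -/
noncomputable def evalHom (ω : Fin n → V →ᵃ[ℝ] ℝ) (k : ℕ) :
    homogeneousSubmodule (Fin n) ℚ k →ₗ[ℚ] vgFil ω k :=
  (aeval (heaviside ω)).toLinearMap.restrict fun _ hp =>
    mem_vgFil.2 ⟨_, mem_degreeLT_of_isHomogeneous hp, rfl⟩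

/-- The map from the homogeneous polynomials of degree `k` to `Pᵏ/Pᵏ⁻¹` given by evaluation at the
Heaviside functions. -/
noncomputable def toGr (ω : Fin n → V →ᵃ[ℝ] ℝ) (k : ℕ) :
    homogeneousSubmodule (Fin n) ℚ k →ₗ[ℚ] vgGr ω k :=
  (Submodule.mkQ _).comp (evalHom ω k)

theorem toGr_eq_mk_iff {p : homogeneousSubmodule (Fin n) ℚ k} {a : vgFil ω k} :
    toGr ω k p = Submodule.Quotient.mk a ↔ aeval (heaviside ω) p.1 - a.1 ∈ vgPrev ω k :=
  Submodule.Quotient.eq _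

theorem toGr_surjective (ω : Fin n → V →ᵃ[ℝ] ℝ) (k : ℕ) : Function.Surjective (toGr ω k) := by
  intro x
  obtain ⟨a, rfl⟩ := Submodule.Quotient.mk_surjective _ x
  obtain ⟨p, hp, hpa⟩ := mem_vgFil.1 a.2
  refine ⟨⟨homogeneousComponent k p, homogeneousComponent_mem k p⟩, ?_⟩
  rw [toGr_eq_mk_iff, ← hpa, ← map_sub, mem_vgPrev]
  exact ⟨_, neg_sub p _ ▸ neg_mem (hasSymbol_homogeneousComponent hp).sub_mem_degreeLT, rfl⟩

theorem ker_toGr (ω : Fin n → V →ᵃ[ℝ] ℝ) (k : ℕ) :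
    LinearMap.ker (toGr ω k) = LinearMap.ker (toB ω k) := by
  ext p
  have hB : toB ω k p = 0 ↔ p.1 ∈ bIdeal (Hyp ω) (Hplus ω) (Hminus ω) :=
    Subtype.ext_iff.trans Ideal.Quotient.eq_zero_iff_mem
  rw [LinearMap.mem_ker, LinearMap.mem_ker, hB, ← Submodule.Quotient.mk_zero, toGr_eq_mk_iff,
    ← aeval_mem_vgPrev_iff p.2, ZeroMemClass.coe_zero, sub_zero]

/-- The isomorphism `Pᵏ/Pᵏ⁻¹ ≃ B(𝒜)ₖ`: both sides are the quotient of the homogeneous polynomials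
of degree `k` by the same subspace. -/
noncomputable def grEquiv (ω : Fin n → V →ᵃ[ℝ] ℝ) (k : ℕ) :
    vgGr ω k ≃ₗ[ℚ] bGrade (Hyp ω) (Hplus ω) (Hminus ω) k :=
  ((toGr ω k).quotKerEquivOfSurjective (toGr_surjective ω k)).symm.trans
    ((Submodule.quotEquivOfEq _ _ (ker_toGr ω k)).trans
      ((toB ω k).quotKerEquivOfSurjective (toB_surjective ω k)))

theorem grEquiv_toGr (ω : Fin n → V →ᵃ[ℝ] ℝ) (k : ℕ) (p : homogeneousSubmodule (Fin n) ℚ k) :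
    grEquiv ω k (toGr ω k p) = toB ω k p := by
  rw [grEquiv, LinearEquiv.trans_apply, LinearMap.quotKerEquivOfSurjective_symm_apply,
    LinearEquiv.trans_apply, Submodule.quotEquivOfEq_mk,
    LinearMap.quotKerEquivOfSurjective_apply_mk]

theorem toGr_one {a : vgFil ω 0} (ha : (a : LocallyConstant (M₁ ω) ℚ) = 1) :
    toGr ω 0 ⟨1, isHomogeneous_one _ _⟩ = Submodule.Quotient.mk a := by
  rw [toGr_eq_mk_iff, ha, map_one, sub_self]
  exact zero_mem _

theorem toGr_mul {a : vgFil ω k} {b : vgFil ω l} {c : vgFil ω (k + l)}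
    (hc : (c : LocallyConstant (M₁ ω) ℚ) = a * b) {p : homogeneousSubmodule (Fin n) ℚ k}
    {q : homogeneousSubmodule (Fin n) ℚ l} (hp : toGr ω k p = Submodule.Quotient.mk a)
    (hq : toGr ω l q = Submodule.Quotient.mk b) :
    toGr ω (k + l) ⟨p.1 * q.1, IsHomogeneous.mul p.2 q.2⟩ = Submodule.Quotient.mk c := by
  rw [toGr_eq_mk_iff] at hp hq ⊢
  have hpq := mul_mem_vgPrev (evalHom ω k p).2 hq
  have hpb := mul_mem_vgPrev b.2 hp
  rw [add_comm l k] at hpb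
  convert add_mem hpq hpb using 1
  change _ = aeval (heaviside ω) p.1 * _ + _
  rw [hc, map_mul]
  ring

end Graded

/-- The associated graded algebra `⊕ₖ Pᵏ/Pᵏ⁻¹` of the VG filtration of
`H⁰(M₁(𝒜))` is isomorphic as a graded `ℚ`-algebra to `B(𝒜)` (graded by total degree in
the generators): there are linear equivalences `f k : Pᵏ/Pᵏ⁻¹ ≃ B(𝒜)ₖ` sending the
class of the constant function `1` to `1` and compatible with multiplication. -/
theorem vg_associated_graded (ω : Fin n → V →ᵃ[ℝ] ℝ) (hω : ∀ i, (ω i).linear ≠ 0) :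
    ∃ f : ∀ k : ℕ, vgGr ω k ≃ₗ[ℚ] ↥(bGrade (Hyp ω) (Hplus ω) (Hminus ω) k),
      (∀ a : ↥(vgFil ω 0), (a : LocallyConstant (M₁ ω) ℚ) = 1 →
        ((f 0 (Submodule.Quotient.mk a) :
            ↥(bGrade (Hyp ω) (Hplus ω) (Hminus ω) 0)) :
          BAlg (Hyp ω) (Hplus ω) (Hminus ω)) = 1) ∧
      (∀ (k l : ℕ) (a : ↥(vgFil ω k)) (b : ↥(vgFil ω l)) (c : ↥(vgFil ω (k + l))),
        (c : LocallyConstant (M₁ ω) ℚ) =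
            (a : LocallyConstant (M₁ ω) ℚ) * (b : LocallyConstant (M₁ ω) ℚ) →
        ((f (k + l) (Submodule.Quotient.mk c) :
            ↥(bGrade (Hyp ω) (Hplus ω) (Hminus ω) (k + l))) :
          BAlg (Hyp ω) (Hplus ω) (Hminus ω)) =
        ((f k (Submodule.Quotient.mk a) :
            ↥(bGrade (Hyp ω) (Hplus ω) (Hminus ω) k)) :
          BAlg (Hyp ω) (Hplus ω) (Hminus ω)) *
        ((f l (Submodule.Quotient.mk b) :
            ↥(bGrade (Hyp ω) (Hplus ω) (Hminus ω) l)) :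
          BAlg (Hyp ω) (Hplus ω) (Hminus ω))) := by
  refine ⟨grEquiv ω, fun a ha => ?_, fun k l a b c hc => ?_⟩
  · rw [← toGr_one ha, grEquiv_toGr]
    rfl
  · obtain ⟨p, hp⟩ := toGr_surjective ω k (Submodule.Quotient.mk a)
    obtain ⟨q, hq⟩ := toGr_surjective ω l (Submodule.Quotient.mk b)
    rw [← toGr_mul hc hp hq, ← hp, ← hq, grEquiv_toGr, grEquiv_toGr, grEquiv_toGr]
    exact map_mul (Ideal.Quotient.mk _) p.1 q.1
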